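/- Let R_1, …, R_n (n ≥ 1) be a side-attachment sequence of axis-parallel rectangles. Then the rectangular tiling (R_1,…,R_n) of U_n = R_1 ∪ ⋯ ∪ R_n is area-universal: every assignment of positive areas to the rectangles can be realized by a weakly equivalent rectangular tiling. -/

import Mathlib

open Set

/-- An axis-parallel rectangle `[x1,x2] × [y1,y2]` with `x1 < x2` and `y1 < y2`. -/
structure Rect where
  x1 : ℝ
  x2 : ℝ
  y1 : ℝ
  y2 : ℝ
  hx : x1 < x2
  hy : y1 < y2

namespace Rect

/-- The rectangle as a subset of the plane. -/
def toSet (R : Rect) : Set (ℝ × ℝ) := Set.Icc R.x1 R.x2 ×ˢ Set.Icc R.y1 R.y2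

/-- The area of the rectangle. -/
noncomputable def area (R : Rect) : ℝ := (R.x2 - R.x1) * (R.y2 - R.y1)

end Rect

/-- Vertical closed segment `{x} × [c,d]`. -/
def vseg (x c d : ℝ) : Set (ℝ × ℝ) := ({x} : Set ℝ) ×ˢ Set.Icc c d

/-- Horizontal closed segment `[a,b] × {y}`. -/
def hseg (a b y : ℝ) : Set (ℝ × ℝ) := Set.Icc a b ×ˢ ({y} : Set ℝ)

/-- Relative interior of a vertical segment. -/
def vsegOpen (x c d : ℝ) : Set (ℝ × ℝ) := ({x} : Set ℝ) ×ˢ Set.Ioo c d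

/-- Relative interior of a horizontal segment. -/
def hsegOpen (a b y : ℝ) : Set (ℝ × ℝ) := Set.Ioo a b ×ˢ ({y} : Set ℝ)

/-- `S` is one of the four sides of the rectangle `R`. -/
def Rect.IsSide (R : Rect) (S : Set (ℝ × ℝ)) : Prop :=
  S = vseg R.x1 R.y1 R.y2 ∨ S = vseg R.x2 R.y1 R.y2 ∨
  S = hseg R.x1 R.x2 R.y1 ∨ S = hseg R.x1 R.x2 R.y2

/-- A rectangular tiling: a finite family of axis-parallel rectangles with pairwise
disjoint interiors whose union is an axis-parallel rectangle `F`. -/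
structure Tiling (I : Type*) [Fintype I] where
  R : I → Rect
  F : Rect
  disj : Pairwise fun i j => interior ((R i).toSet) ∩ interior ((R j).toSet) = ∅
  union : (⋃ i, (R i).toSet) = F.toSet

variable {I : Type*} [Fintype I]

/-- An internal line segment of a tiling: a horizontal or vertical closed segment of
positive length contained in the union of the boundaries of the rectangles, whose
relative interior lies in the topological interior of the bounding rectangle. -/
def IsInternalSeg (T : Tiling I) (S : Set (ℝ × ℝ)) : Prop :=
  (∃ x c d : ℝ, c < d ∧ S = vseg x c d ∧
      S ⊆ (⋃ i, frontier ((T.R i).toSet)) ∧ vsegOpen x c d ⊆ interior T.F.toSet) ∨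
  (∃ a b y : ℝ, a < b ∧ S = hseg a b y ∧
      S ⊆ (⋃ i, frontier ((T.R i).toSet)) ∧ hsegOpen a b y ⊆ interior T.F.toSet)

/-- A maximal internal line segment: an internal segment not properly contained in
any other internal segment. -/
def IsMaxInternalSeg (T : Tiling I) (S : Set (ℝ × ℝ)) : Prop :=
  IsInternalSeg T S ∧ ∀ S', IsInternalSeg T S' → S ⊆ S' → S' = S

/-- `A ∩ B` is a vertical segment of positive length with `A` lying to the left of `B`. -/
def LeftAdj (A B : Rect) : Prop :=
  A.x2 = B.x1 ∧ ∃ c d : ℝ, c < d ∧ A.toSet ∩ B.toSet = vseg A.x2 c d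

/-- `A ∩ B` is a horizontal segment of positive length with `A` lying below `B`. -/
def BelowAdj (A B : Rect) : Prop :=
  A.y2 = B.y1 ∧ ∃ a b : ℝ, a < b ∧ A.toSet ∩ B.toSet = hseg a b A.y2

/-- `A` meets the left side of `F` in a segment of positive length. -/
def MeetsLeftSide (A F : Rect) : Prop :=
  ∃ c d : ℝ, c < d ∧ A.toSet ∩ vseg F.x1 F.y1 F.y2 = vseg F.x1 c d

/-- `A` meets the right side of `F` in a segment of positive length. -/
def MeetsRightSide (A F : Rect) : Prop :=
  ∃ c d : ℝ, c < d ∧ A.toSet ∩ vseg F.x2 F.y1 F.y2 = vseg F.x2 c d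

/-- `A` meets the bottom side of `F` in a segment of positive length. -/
def MeetsBottomSide (A F : Rect) : Prop :=
  ∃ a b : ℝ, a < b ∧ A.toSet ∩ hseg F.x1 F.x2 F.y1 = hseg a b F.y1

/-- `A` meets the top side of `F` in a segment of positive length. -/
def MeetsTopSide (A F : Rect) : Prop :=
  ∃ a b : ℝ, a < b ∧ A.toSet ∩ hseg F.x1 F.x2 F.y2 = hseg a b F.y2

/-- Two tilings indexed by the same finite set are weakly equivalent. -/
def WeakEquiv (T T' : Tiling I) : Prop :=
  (∀ i j : I, LeftAdj (T.R i) (T.R j) ↔ LeftAdj (T'.R i) (T'.R j)) ∧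
  (∀ i j : I, BelowAdj (T.R i) (T.R j) ↔ BelowAdj (T'.R i) (T'.R j)) ∧
  (∀ i : I, MeetsLeftSide (T.R i) T.F ↔ MeetsLeftSide (T'.R i) T'.F) ∧
  (∀ i : I, MeetsRightSide (T.R i) T.F ↔ MeetsRightSide (T'.R i) T'.F) ∧
  (∀ i : I, MeetsTopSide (T.R i) T.F ↔ MeetsTopSide (T'.R i) T'.F) ∧
  (∀ i : I, MeetsBottomSide (T.R i) T.F ↔ MeetsBottomSide (T'.R i) T'.F)

/-- A tiling is area-universal if every assignment of positive areas to the rectangles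
is realized by a weakly equivalent tiling. -/
def AreaUniversal (T : Tiling I) : Prop :=
  ∀ w : I → ℝ, (∀ i, 0 < w i) → ∃ T' : Tiling I, WeakEquiv T T' ∧ ∀ i, (T'.R i).area = w i

/-- A tiling is generic if no point belongs to four or more of the rectangles. -/
def Generic (T : Tiling I) : Prop :=
  ∀ p : ℝ × ℝ, ∀ s : Finset I, (∀ i ∈ s, p ∈ (T.R i).toSet) → s.card ≤ 3

/-- A side-attachment sequence: rectangles with pairwise disjoint interiors such that
every partial union `U_j = R_0 ∪ ⋯ ∪ R_j` is an axis-parallel rectangle. -/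
def SideAttachSeq {n : ℕ} (R : Fin n → Rect) : Prop :=
  (Pairwise fun i j => interior ((R i).toSet) ∩ interior ((R j).toSet) = ∅) ∧
  ∀ j : Fin n, ∃ U : Rect, (⋃ i ∈ Set.Iic j, (R i).toSet) = U.toSet

/-! Two rectangles with disjoint interiors are separated by a line; if moreover their union is a
rectangle, looking at its corners shows that they share a full side. So each step of a
side-attachment sequence glues a new rectangle to a full side `s` of the current bounding
rectangle. The contacts of the enlarged tiling are determined by `s` and the contacts of the old
tiling: the new rectangle is adjacent exactly to the rectangles meeting the side `s`. Hence the
prescribed areas can be realized greedily, by attaching to the same side of a realization of the old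
tiling a rectangle of the right thickness.

The four directions are treated simultaneously by describing a rectangle by its support function,
which sends each of the four outward normals to the maximum over the rectangle of the corresponding
linear functional. -/

/-! ### Sides and support functions -/

/-- The four sides of a rectangle, or the corresponding outward directions. -/
inductive Side
  | left
  | right
  | bottom
  | top
deriving DecidableEq

namespace Side

/-- The opposite side. -/
def opp : Side → Side
  | left => right
  | right => left
  | bottom => top
  | top => bottom

/-- The outward unit normal of a side. -/
def normal : Side → ℝ × ℝ
  | left => (-1, 0)
  | right => (1, 0)
  | bottom => (0, -1)
  | top => (0, 1)

/-- The inner product of a point with the outward unit normal of a side. -/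
def coord (s : Side) (p : ℝ × ℝ) : ℝ := s.normal.1 * p.1 + s.normal.2 * p.2

/-- Two sides are perpendicular, that is, they share a corner. -/
def Perp (s t : Side) : Prop := t ≠ s ∧ t ≠ s.opp

@[simp]
theorem opp_opp (s : Side) : s.opp.opp = s := by
  cases s <;> rfl

theorem opp_ne (s : Side) : s.opp ≠ s := by
  cases s <;> simp [opp]

theorem coord_opp (s : Side) (p : ℝ × ℝ) : s.opp.coord p = -s.coord p := by
  cases s <;> simp [opp, coord, normal]

theorem eq_or_eq_opp_or_perp (s t : Side) : t = s ∨ t = s.opp ∨ s.Perp t := by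
  simp only [Perp]
  tauto

theorem Perp.symm {s t : Side} (h : s.Perp t) : t.Perp s :=
  ⟨h.1.symm, fun e => h.2 (e ▸ t.opp_opp.symm)⟩

theorem Perp.opp_left {s t : Side} (h : s.Perp t) : s.opp.Perp t :=
  ⟨h.2, s.opp_opp.symm ▸ h.1⟩

theorem Perp.opp_right {s t : Side} (h : s.Perp t) : s.Perp t.opp :=
  h.symm.opp_left.symm

theorem Perp.eq_or_eq_opp {s t u : Side} (ht : s.Perp t) (hu : s.Perp u) :
    u = t ∨ u = t.opp := by
  cases s <;> cases t <;> cases u <;> simp_all [Perp, opp]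

theorem exists_perp (s : Side) : ∃ t, s.Perp t := by
  cases s
  exacts [⟨top, by simp [Perp, opp]⟩, ⟨top, by simp [Perp, opp]⟩, ⟨right, by simp [Perp, opp]⟩,
    ⟨right, by simp [Perp, opp]⟩]

theorem exists_coord_eq {s t : Side} (h : s.Perp t) (a b : ℝ) :
    ∃ p, s.coord p = a ∧ t.coord p = b := by
  refine ⟨a • s.normal + b • t.normal, ?_⟩
  cases s <;> cases t <;> simp_all [Perp, opp, coord, normal]

protected theorem forall_iff {P : Side → Prop} :
    (∀ s, P s) ↔ P left ∧ P right ∧ P bottom ∧ P top :=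
  ⟨fun h => ⟨h _, h _, h _, h _⟩, fun ⟨hl, hr, hb, ht⟩ s => by cases s <;> assumption⟩

end Side

namespace Rect

variable {A B F : Rect} {s t : Side}

/-- The support function of a rectangle: the maximum of `s.coord` over it. -/
def support (A : Rect) : Side → ℝ
  | .left => -A.x1
  | .right => A.x2
  | .bottom => -A.y1
  | .top => A.y2

/-- The rectangle with a given support function. -/
def ofSupport (f : Side → ℝ) (hf : ∀ s, -f s.opp < f s) : Rect where
  x1 := -f .left
  x2 := f .right
  y1 := -f .bottom
  y2 := f .top
  hx := hf .right
  hy := hf .top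

@[simp]
theorem support_ofSupport (f : Side → ℝ) (hf : ∀ s, -f s.opp < f s) :
    (ofSupport f hf).support = f := by
  ext s
  cases s <;> simp [support, ofSupport]

theorem neg_support_opp_lt_support (A : Rect) (s : Side) : -A.support s.opp < A.support s := by
  cases s <;> simp [support, Side.opp, A.hx, A.hy]

/-- The rectangle obtained from `A` by moving its side `s` to the line `s.coord p = r`. -/
def moveSide (A : Rect) (s : Side) (r : ℝ) (hr : -A.support s.opp < r) : Rect :=
  ofSupport (Function.update A.support s r) fun t => by
    rcases s.eq_or_eq_opp_or_perp t with rfl | rfl | hst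
    · simpa [t.opp_ne] using hr
    · simpa [s.opp_ne] using neg_lt.1 hr
    · simpa [hst.1, hst.opp_right.1] using A.neg_support_opp_lt_support t

@[simp]
theorem support_moveSide (A : Rect) (s : Side) (r : ℝ) (hr : -A.support s.opp < r) :
    (A.moveSide s r hr).support = Function.update A.support s r :=
  support_ofSupport ..

theorem mem_toSet_iff {p : ℝ × ℝ} : p ∈ A.toSet ↔ ∀ s : Side, s.coord p ≤ A.support s := by
  rw [toSet, mem_prod, mem_Icc, mem_Icc]
  simp [Side.forall_iff, Side.coord, Side.normal, support, and_assoc]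

theorem exists_mem_coord_eq (hst : s.Perp t) {r : ℝ} (hr : -A.support s.opp ≤ r)
    (hr' : r ≤ A.support s) :
    ∃ p ∈ A.toSet, s.coord p = r ∧ t.coord p = A.support t := by
  obtain ⟨p, hs, ht⟩ := Side.exists_coord_eq hst r (A.support t)
  refine ⟨p, mem_toSet_iff.2 fun u => ?_, hs, ht⟩
  rcases s.eq_or_eq_opp_or_perp u with rfl | rfl | hsu
  · rwa [hs]
  · rw [s.coord_opp, hs]
    exact neg_le.1 hr
  rcases hst.eq_or_eq_opp hsu with rfl | rfl
  · exact ht.le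
  · rw [t.coord_opp, ht]
    exact (neg_lt.1 (A.neg_support_opp_lt_support t)).le

theorem toSet_subset_iff : A.toSet ⊆ F.toSet ↔ ∀ s, A.support s ≤ F.support s := by
  refine ⟨fun h s => ?_, fun h p hp => ?_⟩
  · obtain ⟨t, hst⟩ := s.exists_perp
    obtain ⟨p, hp, hps, -⟩ := exists_mem_coord_eq hst (A.neg_support_opp_lt_support s).le le_rfl
    exact hps ▸ mem_toSet_iff.1 (h hp) s
  · exact mem_toSet_iff.2 fun s => (mem_toSet_iff.1 hp s).trans (h s)

theorem interior_toSet (A : Rect) : interior A.toSet = Ioo A.x1 A.x2 ×ˢ Ioo A.y1 A.y2 := by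
  rw [toSet, interior_prod_eq, interior_Icc, interior_Icc]

theorem closure_interior_toSet (A : Rect) : closure (interior A.toSet) = A.toSet := by
  rw [interior_toSet, closure_prod_eq, closure_Ioo A.hx.ne, closure_Ioo A.hy.ne, toSet]

theorem interior_inter_interior_eq_empty_iff :
    interior A.toSet ∩ interior B.toSet = ∅ ↔ ∃ s : Side, A.support s ≤ -B.support s.opp := by
  have := A.hx
  have := A.hy
  have := B.hx
  have := B.hy
  rw [← not_iff_not, not_exists, Side.forall_iff]
  simp only [interior_toSet, prod_inter_prod, Ioo_inter_Ioo, prod_eq_empty_iff, Ioo_eq_empty_iff,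
    not_or, not_not, lt_inf_iff, sup_lt_iff, support, Side.opp, neg_neg, neg_le_neg_iff, not_le]
  tauto

/-! ### Contacts in terms of support functions -/

/-- The rectangle `A` reflected in the main diagonal. -/
def transpose (A : Rect) : Rect := ⟨A.y1, A.y2, A.x1, A.x2, A.hy, A.hx⟩

theorem toSet_transpose (A : Rect) : A.transpose.toSet = Prod.swap ⁻¹' A.toSet :=
  (preimage_swap_prod _ _).symm

theorem transpose_toSet_subset_iff :
    A.transpose.toSet ⊆ F.transpose.toSet ↔ A.toSet ⊆ F.toSet := by
  rw [toSet_transpose, toSet_transpose, Prod.swap_surjective.preimage_subset_preimage_iff]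

end Rect

theorem preimage_swap_hseg (a b y : ℝ) : Prod.swap ⁻¹' hseg a b y = vseg y a b :=
  preimage_swap_prod _ _

theorem eq_hseg_iff {S : Set (ℝ × ℝ)} {a b y : ℝ} :
    S = hseg a b y ↔ Prod.swap ⁻¹' S = vseg y a b := by
  rw [← preimage_swap_hseg, Prod.swap_surjective.preimage_injective.eq_iff]

theorem exists_lt_vseg_eq_iff {x a b : ℝ} :
    (∃ c d, c < d ∧ vseg x a b = vseg x c d) ↔ a < b := by
  refine ⟨?_, fun h => ⟨a, b, h, rfl⟩⟩
  rintro ⟨c, d, hcd, h⟩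
  have hsub : Icc c d ⊆ Icc a b := (prod_subset_prod_iff_right (singleton_nonempty x)).1 h.ge
  rw [Icc_subset_Icc_iff hcd.le] at hsub
  linarith

section Contacts

variable {A B F : Rect} {s : Side}

theorem leftAdj_iff : LeftAdj A B ↔ A.x2 = B.x1 ∧ A.y1 < B.y2 ∧ B.y1 < A.y2 := by
  refine and_congr_right fun hx => ?_
  have hIcc : Icc A.x1 A.x2 ∩ Icc B.x1 B.x2 = {A.x2} := by
    rw [← hx, Icc_inter_Icc_eq_singleton A.hx.le (hx ▸ B.hx.le)]
  have hinter : A.toSet ∩ B.toSet = vseg A.x2 (A.y1 ⊔ B.y1) (A.y2 ⊓ B.y2) := by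
    rw [Rect.toSet, Rect.toSet, prod_inter_prod, hIcc, Icc_inter_Icc, vseg]
  rw [hinter, exists_lt_vseg_eq_iff]
  simp only [sup_lt_iff, lt_inf_iff, A.hy, B.hy, true_and, and_true]
  tauto

theorem belowAdj_iff_leftAdj_transpose : BelowAdj A B ↔ LeftAdj A.transpose B.transpose := by
  simp only [BelowAdj, LeftAdj, eq_hseg_iff, preimage_inter, Rect.toSet_transpose]
  rfl

theorem exists_inter_vseg_eq_iff (h : A.toSet ⊆ F.toSet) (x : ℝ) :
    (∃ c d, c < d ∧ A.toSet ∩ vseg x F.y1 F.y2 = vseg x c d) ↔ x ∈ Icc A.x1 A.x2 := by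
  constructor
  · rintro ⟨c, d, hcd, heq⟩
    have hmem : (x, c) ∈ A.toSet ∩ vseg x F.y1 F.y2 := heq ▸ ⟨rfl, left_mem_Icc.2 hcd.le⟩
    exact hmem.1.1
  · intro hx
    refine ⟨A.y1, A.y2, A.hy, ?_⟩
    have hy : Icc A.y1 A.y2 ⊆ Icc F.y1 F.y2 := fun y hy =>
      (h (show (x, y) ∈ A.toSet from ⟨hx, hy⟩)).2
    rw [Rect.toSet, vseg, prod_inter_prod, inter_eq_right.2 (singleton_subset_iff.2 hx),
      inter_eq_left.2 hy, vseg]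

theorem meetsBottomSide_iff_meetsLeftSide_transpose :
    MeetsBottomSide A F ↔ MeetsLeftSide A.transpose F.transpose := by
  simp only [MeetsBottomSide, MeetsLeftSide, eq_hseg_iff, preimage_inter, preimage_swap_hseg,
    Rect.toSet_transpose]
  rfl

theorem meetsTopSide_iff_meetsRightSide_transpose :
    MeetsTopSide A F ↔ MeetsRightSide A.transpose F.transpose := by
  simp only [MeetsTopSide, MeetsRightSide, eq_hseg_iff, preimage_inter, preimage_swap_hseg,
    Rect.toSet_transpose]
  rfl

theorem meetsLeftSide_iff (h : A.toSet ⊆ F.toSet) : MeetsLeftSide A F ↔ A.x1 = F.x1 := by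
  have hle : F.x1 ≤ A.x1 := neg_le_neg_iff.1 (Rect.toSet_subset_iff.1 h .left)
  rw [MeetsLeftSide, exists_inter_vseg_eq_iff h, mem_Icc, and_iff_left (hle.trans A.hx.le),
    hle.ge_iff_eq']

theorem meetsRightSide_iff (h : A.toSet ⊆ F.toSet) : MeetsRightSide A F ↔ A.x2 = F.x2 := by
  have hle : A.x2 ≤ F.x2 := Rect.toSet_subset_iff.1 h .right
  rw [MeetsRightSide, exists_inter_vseg_eq_iff h, mem_Icc, and_iff_right (A.hx.le.trans hle),
    hle.ge_iff_eq]

/-- `A` meets the side `s` of `F` in a segment of positive length. -/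
def MeetsSide : Side → Rect → Rect → Prop
  | .left => MeetsLeftSide
  | .right => MeetsRightSide
  | .bottom => MeetsBottomSide
  | .top => MeetsTopSide

/-- `A` lies beyond the side `s` of `B` and shares a segment of positive length with it. -/
def AdjAlong : Side → Rect → Rect → Prop
  | .left, A, B => LeftAdj A B
  | .right, A, B => LeftAdj B A
  | .bottom, A, B => BelowAdj A B
  | .top, A, B => BelowAdj B A

theorem meetsSide_iff (h : A.toSet ⊆ F.toSet) : MeetsSide s A F ↔ A.support s = F.support s := by
  have h' := Rect.transpose_toSet_subset_iff.2 h
  cases s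
  · exact (meetsLeftSide_iff h).trans neg_inj.symm
  · exact meetsRightSide_iff h
  · exact (meetsBottomSide_iff_meetsLeftSide_transpose.trans (meetsLeftSide_iff h')).trans
      neg_inj.symm
  · exact meetsTopSide_iff_meetsRightSide_transpose.trans (meetsRightSide_iff h')

theorem adjAlong_opp : AdjAlong s.opp A B ↔ AdjAlong s B A := by
  cases s <;> rfl

theorem adjAlong_iff : AdjAlong s A B ↔
    -A.support s.opp = B.support s ∧ ∀ t, s.Perp t → -A.support t.opp < B.support t := by
  cases s <;>
    simp only [Side.forall_iff, AdjAlong, Side.Perp, Side.opp, belowAdj_iff_leftAdj_transpose,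
      leftAdj_iff, Rect.support, Rect.transpose] <;>
    grind

theorem not_adjAlong_self : ¬ AdjAlong s A A := fun h =>
  (A.neg_support_opp_lt_support s).ne (adjAlong_iff.1 h).1

theorem weakEquiv_iff {I : Type*} [Fintype I] {T T' : Tiling I} : WeakEquiv T T' ↔
    (∀ s i j, AdjAlong s (T.R i) (T.R j) ↔ AdjAlong s (T'.R i) (T'.R j)) ∧
      ∀ s i, MeetsSide s (T.R i) T.F ↔ MeetsSide s (T'.R i) T'.F := by
  simp only [WeakEquiv, Side.forall_iff, AdjAlong, MeetsSide]
  exact ⟨fun ⟨hadjL, hadjB, hL, hR, hT, hB⟩ =>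
      ⟨⟨hadjL, fun i j => hadjL j i, hadjB, fun i j => hadjB j i⟩, hL, hR, hB, hT⟩,
    fun ⟨⟨hadjL, _, hadjB, _⟩, hL, hR, hB, hT⟩ => ⟨hadjL, hadjB, hL, hR, hT, hB⟩⟩

end Contacts

/-! ### Attaching a rectangle to a side -/

/-- `A` is attached to the full side `s` of `F`, and `G` is the resulting rectangle. -/
structure Attach (s : Side) (A F G : Rect) : Prop where
  contact : -A.support s.opp = F.support s
  support_of_perp : ∀ t, s.Perp t → A.support t = F.support t
  support_self : G.support s = A.support s
  support_of_ne : ∀ t, t ≠ s → G.support t = F.support t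

namespace Attach

variable {s t : Side} {A B F G : Rect}

theorem support_lt (h : Attach s A F G) : F.support s < G.support s := by
  rw [← h.contact, h.support_self]
  exact A.neg_support_opp_lt_support s

theorem right_subset (h : Attach s A F G) : F.toSet ⊆ G.toSet := by
  refine Rect.toSet_subset_iff.2 fun t => ?_
  by_cases hts : t = s
  · exact hts ▸ h.support_lt.le
  · exact (h.support_of_ne t hts).ge

theorem support_opp_lt (h : Attach s A F G) : A.support s.opp < G.support s.opp := by
  have := F.neg_support_opp_lt_support s
  rw [h.support_of_ne _ s.opp_ne]
  linarith [h.contact]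

theorem left_subset (h : Attach s A F G) : A.toSet ⊆ G.toSet := by
  refine Rect.toSet_subset_iff.2 fun t => ?_
  rcases s.eq_or_eq_opp_or_perp t with rfl | rfl | hst
  · exact h.support_self.ge
  · exact h.support_opp_lt.le
  · rw [h.support_of_perp t hst, h.support_of_ne t hst.1]

theorem union_eq (h : Attach s A F G) : A.toSet ∪ F.toSet = G.toSet := by
  refine (union_subset h.left_subset h.right_subset).antisymm fun p hp => ?_
  rw [Rect.mem_toSet_iff] at hp
  rw [mem_union, Rect.mem_toSet_iff, Rect.mem_toSet_iff]
  rcases le_total (F.support s) (s.coord p) with hps | hps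
  · refine .inl fun t => ?_
    rcases s.eq_or_eq_opp_or_perp t with rfl | rfl | hst
    · exact h.support_self ▸ hp t
    · rw [s.coord_opp]
      linarith [h.contact]
    · rw [h.support_of_perp t hst, ← h.support_of_ne t hst.1]
      exact hp t
  · refine .inr fun t => ?_
    by_cases hts : t = s
    · exact hts ▸ hps
    · exact h.support_of_ne t hts ▸ hp t

theorem interior_inter_eq_empty (h : Attach s A F G) (hB : B.toSet ⊆ F.toSet) :
    interior B.toSet ∩ interior A.toSet = ∅ :=
  Rect.interior_inter_interior_eq_empty_iff.2
    ⟨s, (Rect.toSet_subset_iff.1 hB s).trans_eq h.contact.symm⟩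

theorem meetsSide_left_iff (h : Attach s A F G) : MeetsSide t A G ↔ t ≠ s.opp := by
  rw [meetsSide_iff h.left_subset]
  rcases s.eq_or_eq_opp_or_perp t with rfl | rfl | hst
  · exact iff_of_true h.support_self.symm t.opp_ne.symm
  · exact iff_of_false h.support_opp_lt.ne (not_not_intro rfl)
  · exact iff_of_true ((h.support_of_perp t hst).trans (h.support_of_ne t hst.1).symm) hst.2

theorem meetsSide_iff_of_subset (h : Attach s A F G) (hB : B.toSet ⊆ F.toSet) :
    MeetsSide t B G ↔ t ≠ s ∧ MeetsSide t B F := by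
  rw [meetsSide_iff (hB.trans h.right_subset), meetsSide_iff hB]
  by_cases hts : t = s
  · have hlt : B.support s < G.support s := (Rect.toSet_subset_iff.1 hB s).trans_lt h.support_lt
    simp [hts, hlt.ne]
  · simp [hts, h.support_of_ne t hts]

theorem adjAlong_iff_of_subset (h : Attach s A F G) (hB : B.toSet ⊆ F.toSet) :
    AdjAlong t A B ↔ t = s ∧ MeetsSide t B F := by
  have hle := Rect.toSet_subset_iff.1 hB
  rw [adjAlong_iff, meetsSide_iff hB]
  constructor
  · rintro ⟨hcontact, hperp⟩
    rcases s.eq_or_eq_opp_or_perp t with rfl | rfl | hst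
    · exact ⟨rfl, hcontact.symm.trans h.contact⟩
    · rw [s.opp_opp] at hcontact
      linarith [A.neg_support_opp_lt_support s, B.neg_support_opp_lt_support s, hle s, h.contact]
    · linarith [hperp s hst.symm, hle s, h.contact]
  · rintro ⟨rfl, hmeets⟩
    refine ⟨h.contact.trans hmeets.symm, fun u hu => ?_⟩
    calc -A.support u.opp = -F.support u.opp := by rw [h.support_of_perp _ hu.opp_right]
      _ ≤ -B.support u.opp := neg_le_neg (hle _)
      _ < B.support u := B.neg_support_opp_lt_support u

end Attach

section Existence

variable {A F G : Rect} {s t : Side}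

theorem support_eq_of_union_eq (hU : A.toSet ∪ F.toSet = G.toSet)
    (hFA : F.support s ≤ -A.support s.opp) (hst : s.Perp t) :
    A.support s = G.support s ∧ A.support t = G.support t := by
  have hA := Rect.toSet_subset_iff.1 (hU ▸ subset_union_left : A.toSet ⊆ G.toSet)
  obtain ⟨p, hpG, hps, hpt⟩ :=
    Rect.exists_mem_coord_eq hst (G.neg_support_opp_lt_support s).le le_rfl
  -- The corners of `G` on the side `s` lie beyond `F`, so they are covered by `A`.
  have hpF : p ∉ F.toSet := fun hpF => by
    linarith [Rect.mem_toSet_iff.1 hpF s, A.neg_support_opp_lt_support s, hA s]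
  have hpA := Rect.mem_toSet_iff.1 ((hU ▸ hpG : p ∈ A.toSet ∪ F.toSet).resolve_right hpF)
  exact ⟨(hA s).antisymm (hps ▸ hpA s), (hA t).antisymm (hpt ▸ hpA t)⟩

theorem neg_support_opp_eq_of_union_eq (hU : A.toSet ∪ F.toSet = G.toSet)
    (hFA : F.support s ≤ -A.support s.opp) : -A.support s.opp = F.support s := by
  refine hFA.antisymm' (le_of_not_gt fun hlt => ?_)
  have hA := Rect.toSet_subset_iff.1 (hU ▸ subset_union_left : A.toSet ⊆ G.toSet)
  have hF := Rect.toSet_subset_iff.1 (hU ▸ subset_union_right : F.toSet ⊆ G.toSet)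
  obtain ⟨r, hFr, hrA⟩ := exists_between hlt
  obtain ⟨t, hst⟩ := s.exists_perp
  obtain ⟨p, hpG, hps, -⟩ := Rect.exists_mem_coord_eq (A := G) (r := r) hst
    (by linarith [hF s.opp, F.neg_support_opp_lt_support s])
    (by linarith [hA s, A.neg_support_opp_lt_support s])
  -- The point `p` lies in the gap between `F` and `A`.
  rcases (hU ▸ hpG : p ∈ A.toSet ∪ F.toSet) with hpA | hpF
  · linarith [Rect.mem_toSet_iff.1 hpA s.opp, s.coord_opp p]
  · linarith [Rect.mem_toSet_iff.1 hpF s]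

theorem exists_attach_of_union_eq (hdisj : interior A.toSet ∩ interior F.toSet = ∅)
    (hU : A.toSet ∪ F.toSet = G.toSet) : ∃ s, Attach s A F G := by
  obtain ⟨s, hFA⟩ := Rect.interior_inter_interior_eq_empty_iff.1 (inter_comm _ _ ▸ hdisj)
  have hAF : A.support s.opp ≤ -F.support s.opp.opp := by
    rw [s.opp_opp]
    exact le_neg_of_le_neg hFA
  have hA {t} (hst : s.Perp t) := support_eq_of_union_eq hU hFA hst
  have hF {t} (hst : s.Perp t) :=
    support_eq_of_union_eq (union_comm _ _ ▸ hU) hAF hst.opp_left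
  obtain ⟨u, hsu⟩ := s.exists_perp
  refine ⟨s, neg_support_opp_eq_of_union_eq hU hFA, fun t hst => (hA hst).2.trans (hF hst).2.symm,
    (hA hsu).1.symm, fun t hts => ?_⟩
  by_cases htso : t = s.opp
  · exact htso ▸ (hF hsu).1.symm
  · exact (hF ⟨hts, htso⟩).2.symm

theorem exists_attach_support_eq (F : Rect) (s : Side) {r : ℝ} (hr : F.support s < r) :
    ∃ A G, Attach s A F G ∧ A.support s = r := by
  let G := F.moveSide s r ((F.neg_support_opp_lt_support s).trans hr)
  have hG : G.support = Function.update F.support s r := Rect.support_moveSide ..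
  have hGF : -G.support s.opp.opp < -F.support s := by simpa [hG] using hr
  let A := G.moveSide s.opp (-F.support s) hGF
  have hA : A.support = Function.update G.support s.opp (-F.support s) := Rect.support_moveSide ..
  have hAs : A.support s = r := by simp [hA, hG, s.opp_ne.symm]
  refine ⟨A, G, ⟨by simp [hA], fun t ht => ?_, by simp [hAs, hG], fun t ht => ?_⟩, hAs⟩
  · rw [hA, Function.update_of_ne ht.2, hG, Function.update_of_ne ht.1]
  · rw [hG, Function.update_of_ne ht]

/-- The length of the side `s` of `F`. -/
def Rect.sideLength (F : Rect) : Side → ℝ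
  | .left | .right => F.y2 - F.y1
  | .bottom | .top => F.x2 - F.x1

theorem Rect.sideLength_pos (F : Rect) (s : Side) : 0 < F.sideLength s := by
  cases s <;> simp [sideLength, F.hx, F.hy]

theorem Attach.area_eq (h : Attach s A F G) :
    A.area = (A.support s - F.support s) * F.sideLength s := by
  have hcontact := h.contact
  have hperp := Side.forall_iff.1 h.support_of_perp
  cases s <;>
    simp only [Rect.support, Side.Perp, Side.opp] at hcontact hperp <;>
    simp only [Rect.area, Rect.sideLength, Rect.support] <;>
    grind

theorem exists_attach_area_eq (F : Rect) (s : Side) {w : ℝ} (hw : 0 < w) :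
    ∃ A G, Attach s A F G ∧ A.area = w := by
  have hl := F.sideLength_pos s
  obtain ⟨A, G, hA, hsupp⟩ :=
    exists_attach_support_eq F s (lt_add_of_pos_right _ (div_pos hw hl))
  refine ⟨A, G, hA, ?_⟩
  rw [hA.area_eq, hsupp, add_sub_cancel_left, div_mul_cancel₀ _ hl.ne']

end Existence

/-! ### Area-universality under attachment -/

attribute [ext] Tiling

section AreaUniversal

variable {J : Type*} [Fintype J] {s : Side} {A A' G G' : Rect} {T T' : Tiling I}

namespace Tiling

theorem toSet_subset (T : Tiling I) (i : I) : (T.R i).toSet ⊆ T.F.toSet :=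
  T.union ▸ subset_iUnion (fun i => (T.R i).toSet) i

/-- The tiling obtained from `T` by attaching the rectangle `A`, with index `none`, to the side `s`
of its bounding rectangle. -/
def attach (T : Tiling I) (h : Attach s A T.F G) : Tiling (Option I) where
  R i := i.elim A T.R
  F := G
  disj := by
    rintro (_ | i) (_ | j) hij
    · exact absurd rfl hij
    · rw [inter_comm]
      exact h.interior_inter_eq_empty (T.toSet_subset j)
    · exact h.interior_inter_eq_empty (T.toSet_subset i)
    · exact T.disj fun e => hij (congrArg some e)
  union := by
    rw [iUnion_option]
    exact T.union.symm ▸ h.union_eq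

/-- The tiling `T` with its rectangles indexed through `e`. -/
def reindex (T : Tiling I) (e : J ≃ I) : Tiling J where
  R j := T.R (e j)
  F := T.F
  disj _ _ hij := T.disj (e.injective.ne hij)
  union := (e.surjective.iUnion_comp fun i => (T.R i).toSet).trans T.union

theorem disjoint_interior_of_forall_disjoint (T : Tiling I)
    (hA : ∀ i, Disjoint (interior A.toSet) (interior (T.R i).toSet)) :
    Disjoint (interior A.toSet) (interior T.F.toSet) := by
  refine Disjoint.mono_right interior_subset ?_
  rw [← T.union, disjoint_iUnion_right]
  intro i
  rw [← (T.R i).closure_interior_toSet]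
  exact (hA i).closure_right isOpen_interior

theorem exists_eq_attach {T : Tiling (Option I)} {T₀ : Tiling I}
    (hR : ∀ i, T.R (some i) = T₀.R i) :
    ∃ s, ∃ h : Attach s (T.R none) T₀.F T.F, T = T₀.attach h := by
  have hdisj : Disjoint (interior (T.R none).toSet) (interior T₀.F.toSet) :=
    T₀.disjoint_interior_of_forall_disjoint fun i =>
      disjoint_iff_inter_eq_empty.2 (hR i ▸ T.disj (Option.some_ne_none i).symm)
  have hU : (T.R none).toSet ∪ T₀.F.toSet = T.F.toSet := by
    simp only [← T.union, iUnion_option, hR, T₀.union]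
  obtain ⟨s, h⟩ := exists_attach_of_union_eq hdisj.inter_eq hU
  exact ⟨s, h, Tiling.ext (funext (Option.forall.2 ⟨rfl, hR⟩)) rfl⟩

theorem areaUniversal_of_unique [Unique I] (T : Tiling I) : AreaUniversal T := by
  intro w hw
  let A : Rect := ⟨0, w default, 0, 1, hw default, one_pos⟩
  let T' : Tiling I := ⟨fun _ => A, A, Subsingleton.pairwise, iUnion_const _⟩
  have hmeets (T : Tiling I) (s : Side) (i : I) : MeetsSide s (T.R i) T.F := by
    have hF : (T.R i).toSet = T.F.toSet := by
      rw [← T.union, Unique.eq_default i]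
      exact (iSup_unique (f := fun i => (T.R i).toSet)).symm
    rw [meetsSide_iff hF.le]
    exact (Rect.toSet_subset_iff.1 hF.le s).antisymm (Rect.toSet_subset_iff.1 hF.ge s)
  refine ⟨T', weakEquiv_iff.2 ⟨fun s i j => ?_, fun s i => ?_⟩, fun i => ?_⟩
  · rw [Subsingleton.elim j i]
    exact iff_of_false not_adjAlong_self not_adjAlong_self
  · exact iff_of_true (hmeets T s i) (hmeets T' s i)
  · simp [T', A, Rect.area, Unique.eq_default i]

end Tiling

theorem WeakEquiv.attach (hT : WeakEquiv T T') (h : Attach s A T.F G) (h' : Attach s A' T'.F G') :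
    WeakEquiv (T.attach h) (T'.attach h') := by
  obtain ⟨hadj, hmeets⟩ := weakEquiv_iff.1 hT
  have hnew t i : AdjAlong t A (T.R i) ↔ AdjAlong t A' (T'.R i) := by
    rw [h.adjAlong_iff_of_subset (T.toSet_subset i), h'.adjAlong_iff_of_subset (T'.toSet_subset i),
      hmeets]
  refine weakEquiv_iff.2 ⟨?_, ?_⟩
  · rintro t (_ | i) (_ | j)
    · exact iff_of_false not_adjAlong_self not_adjAlong_self
    · exact hnew t j
    · exact adjAlong_opp.symm.trans ((hnew t.opp i).trans adjAlong_opp)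
    · exact hadj t i j
  · rintro t (_ | i)
    · exact h.meetsSide_left_iff.trans h'.meetsSide_left_iff.symm
    · exact (h.meetsSide_iff_of_subset (T.toSet_subset i)).trans <|
        (and_congr_right' (hmeets t i)).trans
          (h'.meetsSide_iff_of_subset (T'.toSet_subset i)).symm

theorem AreaUniversal.attach (hT : AreaUniversal T) (h : Attach s A T.F G) :
    AreaUniversal (T.attach h) := by
  intro w hw
  obtain ⟨T', hTT', harea⟩ := hT (w ∘ some) fun i => hw (some i)
  obtain ⟨A', G', h', hA'⟩ := exists_attach_area_eq T'.F s (hw none)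
  exact ⟨T'.attach h', hTT'.attach h h', Option.forall.2 ⟨hA', harea⟩⟩

theorem AreaUniversal.of_forall_some_eq {T : Tiling (Option I)} {T₀ : Tiling I}
    (hT₀ : AreaUniversal T₀) (hR : ∀ i, T.R (some i) = T₀.R i) : AreaUniversal T := by
  obtain ⟨s, h, hT⟩ := Tiling.exists_eq_attach hR
  rw [hT]
  exact hT₀.attach h

theorem AreaUniversal.of_reindex {e : J ≃ I} (hT : AreaUniversal (T.reindex e)) :
    AreaUniversal T := by
  intro w hw
  obtain ⟨T', ⟨hadjL, hadjB, hL, hR, hT, hB⟩, harea⟩ := hT (w ∘ e) fun j => hw (e j)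
  simp only [Tiling.reindex, e.forall_congr_left, e.apply_symm_apply] at hadjL hadjB hL hR hT hB
  exact ⟨T'.reindex e.symm, ⟨hadjL, hadjB, hL, hR, hT, hB⟩,
    fun i => (harea (e.symm i)).trans (congrArg w (e.apply_symm_apply i))⟩

end AreaUniversal

/-! ### Side-attachment sequences -/

namespace SideAttachSeq

variable {n : ℕ} {R : Fin (n + 1) → Rect}

theorem castSucc (h : SideAttachSeq R) : SideAttachSeq fun i : Fin n => R i.castSucc := by
  refine ⟨fun i j hij => h.1 ((Fin.castSucc_injective n).ne hij), fun j => ?_⟩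
  obtain ⟨U, hU⟩ := h.2 j.castSucc
  rw [← Fin.image_castSucc_Iic, biUnion_image] at hU
  exact ⟨U, hU⟩

theorem exists_tiling (h : SideAttachSeq R) : ∃ T : Tiling (Fin (n + 1)), T.R = R := by
  obtain ⟨U, hU⟩ := h.2 (Fin.last n)
  rw [← Fin.top_eq_last, Iic_top, biUnion_univ] at hU
  exact ⟨⟨R, U, h.1, hU⟩, rfl⟩

end SideAttachSeq

/-- The rectangular tiling arising from a side-attachment sequence is
area-universal. -/
theorem sideAttachSeq_areaUniversal
    {n : ℕ} (hn : 1 ≤ n) (T : Tiling (Fin n)) (h : SideAttachSeq T.R) :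
    AreaUniversal T := by
  obtain ⟨n, rfl⟩ := Nat.exists_eq_add_of_le' hn
  induction n with
  | zero => exact Tiling.areaUniversal_of_unique (I := Fin 1) T
  | succ n ih =>
    obtain ⟨T₀, hT₀⟩ := h.castSucc.exists_tiling
    have h₀ : AreaUniversal T₀ := ih n.succ_pos T₀ (hT₀ ▸ h.castSucc)
    suffices AreaUniversal (T.reindex finSuccEquivLast.symm) from this.of_reindex
    refine h₀.of_forall_some_eq fun i => ?_
    rw [hT₀]
    exact congrArg T.R (finSuccEquivLast_symm_some i)
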